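/- Let (k_i)_{i≥1} enumerate ℚ ∩ (0,1) by reading the Kepler tree top-down, left-to-right (so k_1 = 1/2 and the children of k_n are k_{2n} and k_{2n+1}), and let 𝒦 = (a_j)_{j≥1} be the infinite sequence of positive integers obtained by concatenating the reduced continued fraction expansions of k_1, k_2, k_3, …. Then 𝒦 is Minkowski normal: for every k ≥ 1 and every block d = (d_1, …, d_k) of positive integers, the number of indices 1 ≤ i ≤ n − k + 1 with a_{i+j−1} = d_j for all 1 ≤ j ≤ k, divided by n, converges to 2^{−(d_1 + ⋯ + d_k)} as n → ∞. (The number 𝒦 = [2, 3, 1, 2, 4, 1, 3, 2, 2, 1, 1, 2, 5, …] ≈ 0.44031 with these partial quotients is thus Minkowski normal.) -/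

import Mathlib

/-- Value of a finite regular continued fraction
`[a₁, a₂, …, aₙ] = 1/(a₁ + 1/(a₂ + ⋯ + 1/aₙ))`. -/
def cfvQ : List ℕ → ℚ
  | [] => 0
  | a :: t => 1 / (a + cfvQ t)

/-- Fuelled continued fraction digit algorithm: for `r ∈ (0,1)` produce the digit `⌊1/r⌋`
and recurse on the fractional part of `1/r`. -/
def cfeAux : ℕ → ℚ → List ℕ
  | 0, _ => []
  | fuel + 1, r =>
    if 0 < r ∧ r < 1 then (⌊r⁻¹⌋).toNat :: cfeAux fuel (Int.fract r⁻¹) else []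

/-- The reduced regular continued fraction expansion `[a₁, …, aₙ]` (all `aᵢ ≥ 1`, `aₙ ≥ 2`)
of a rational `r ∈ (0,1)`; the empty list for `r ∉ (0,1)`.  (Each step of the digit
algorithm strictly decreases the denominator, so `r.den` steps of fuel always suffice.) -/
def cfe (r : ℚ) : List ℕ := cfeAux r.den r

/-- The Kepler tree rule: if a node carries the rational `r = p/q` (in lowest terms), then
its left child carries `r/(r+1) = p/(p+q)` and its right child carries `1/(r+1) = q/(p+q)`.
(`false` = left child, `true` = right child.) -/
def keplerStep (r : ℚ) (b : Bool) : ℚ := if b then 1 / (r + 1) else r / (r + 1)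

/-- The rational at the node of the Kepler tree indexed by the binary word `w`:
the root `1/2` is indexed by the empty word, and appending `false` (resp. `true`) moves to
the left (resp. right) child. -/
def keplerNode (w : List Bool) : ℚ := w.foldl keplerStep (1 / 2)

/-- The top-down, left-to-right enumeration of the Kepler tree: `keplerSeq 1 = 1/2` is the
root, and the children of `keplerSeq n` are `keplerSeq (2n)` (left) and `keplerSeq (2n+1)`
(right).  (`keplerSeq i` is the `i`-th term `k_i`; `keplerSeq 0` is junk.) -/
def keplerSeq (n : ℕ) : ℚ :=
  if n ≤ 1 then 1 / 2
  else keplerStep (keplerSeq (n / 2)) (decide (n % 2 = 1))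
  termination_by n
  decreasing_by exact Nat.div_lt_self (by omega) (by norm_num)

/-- The reduced continued fraction expansion of the `(i+1)`-st rational `k_{i+1}` of the
Kepler tree (in top-down, left-to-right order). -/
def keplerCFE (i : ℕ) : List ℕ := cfe (keplerSeq (i + 1))

/-- The infinite sequence `𝒦 = [2, 3, 1, 2, 4, 1, 3, 2, 2, 1, 1, 2, 5, …]` of digits
obtained by concatenating the reduced continued fraction expansions of the rationals of the
Kepler tree read top-down, left-to-right; `keplerDigits n` is its `(n+1)`-st digit.
(Each expansion is nonempty, so the concatenation of the first `n + 1` expansions has more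
than `n` digits.) -/
def keplerDigits (n : ℕ) : ℕ := ((List.range (n + 1)).flatMap keplerCFE).getD n 0

/-- `occCount a d n` = number of occurrences of the block `d` among the first `n` digits of
the sequence `a`: the number of (0-indexed) positions `p` with `p + d.length ≤ n` such that
the digits of `a` starting at position `p` spell out `d`.  (Positions `p = i - 1` for
`1 ≤ i ≤ n - d.length + 1`.) -/
noncomputable def occCount (a : ℕ → ℕ) (d : List ℕ) (n : ℕ) : ℕ :=
  Set.ncard {p : ℕ | p + d.length ≤ n ∧ ∀ j < d.length, a (p + j) = d.getD j 0}

/-- A sequence of positive integer digits is *Minkowski normal* if every nonempty block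
`d = (d₁, …, d_k)` of positive integers occurs with asymptotic frequency
`2^{-(d₁ + ⋯ + d_k)}`. -/
def MinkowskiNormalSeq (a : ℕ → ℕ) : Prop :=
  ∀ d : List ℕ, d ≠ [] → (∀ x ∈ d, 0 < x) →
    Filter.Tendsto (fun n => (occCount a d n : ℝ) / n) Filter.atTop
      (nhds (((2 : ℝ) ^ d.sum)⁻¹))

/-!
Let `e(n)` be the expansion of `k_n`. Passing to a child changes it only at the front: `e(2n)` is
`e(n)` with first digit increased by one, and `e(2n + 1)` is `1 :: e(n)`. Hence `e(n)` begins with a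
block `d` of digit sum `s` exactly when `n` lies in a fixed residue class modulo `2 ^ s`, provided
`n ≥ 2 ^ s`. The number `T(n)` of occurrences of `d` in `e(n)` beyond the first digit satisfies
`T(n) = T(⌊n / 2⌋) + 1` if `e(n)` begins with `1 :: d` and `T(n) = T(⌊n / 2⌋)` otherwise, so for
`f(n) = T(n) - 2 ^ (-(s + 1)) * ⌊log₂ n⌋` the differences `f(n) - f(⌊n / 2⌋)` have bounded partial
sums. As `∑_{n < N} f(⌊n / 2⌋)` is the sum of the partial sums of `f` up to `⌊N / 2⌋` and
`⌈N / 2⌉`, this forces `∑_{n < N} f(n) = O(N)`.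

The empty block counts the digits themselves. The first `N` expansions therefore have
`L = ½ ∑_{n ≤ N} ⌊log₂ n⌋ + O(N)` digits and contain `d` in `2 ^ (-s) * L + O(N)` places, and
`N = o(L)`. Occurrences straddling two expansions, and the last, incomplete, expansion, contribute
only `O(N)` more.
-/

open Filter Asymptotics Finset Topology

/-! ### Partial sums -/

section PartialSums

variable {E : Type*} [SeminormedAddCommGroup E]

theorem sum_range_div_two {M : Type*} [AddCommMonoid M] (f : ℕ → M) (N : ℕ) :
    ∑ n ∈ range N, f (n / 2) = ∑ n ∈ range (N / 2), f n + ∑ n ∈ range ((N + 1) / 2), f n := by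
  induction N with
  | zero => simp
  | succ N ih =>
    rw [sum_range_succ, ih, show (N + 1 + 1) / 2 = N / 2 + 1 by omega, sum_range_succ]
    abel

theorem norm_sum_range_le_of_norm_sum_sub_div_two_le {f : ℕ → E} {B : ℝ}
    (hB : ∀ N, ‖∑ n ∈ range N, (f n - f (n / 2))‖ ≤ B) (N : ℕ) :
    ‖∑ n ∈ range N, f n‖ ≤ (‖f 0‖ + B) * N := by
  have hB₀ : 0 ≤ B := by simpa using hB 0
  -- The doubling step adds `B` on top of two half-size bounds; subtracting `B` makes it close up.
  suffices key : ∀ N ≥ 1, ‖∑ n ∈ range N, f n‖ ≤ (‖f 0‖ + B) * N - B by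
    rcases N.eq_zero_or_pos with rfl | hN
    · simp
    · linarith [key N hN]
  intro N
  induction N using Nat.strong_induction_on with
  | _ N ih =>
    intro hN
    obtain rfl | hN : N = 1 ∨ 2 ≤ N := by omega
    · simp
    have hsplit : ∑ n ∈ range N, f n = ∑ n ∈ range (N / 2), f n + ∑ n ∈ range ((N + 1) / 2), f n
        + ∑ n ∈ range N, (f n - f (n / 2)) := by
      rw [sum_sub_distrib, sum_range_div_two]
      abel
    have hhalves : ((N / 2 : ℕ) : ℝ) + ((N + 1) / 2 : ℕ) = N := by
      exact_mod_cast (by omega : N / 2 + (N + 1) / 2 = N)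
    calc ‖∑ n ∈ range N, f n‖
        ≤ ‖∑ n ∈ range (N / 2), f n‖ + ‖∑ n ∈ range ((N + 1) / 2), f n‖
          + ‖∑ n ∈ range N, (f n - f (n / 2))‖ := hsplit ▸ norm_add₃_le
      _ ≤ ((‖f 0‖ + B) * (N / 2 : ℕ) - B) + ((‖f 0‖ + B) * ((N + 1) / 2 : ℕ) - B) + B :=
        add_le_add_three (ih _ (by omega) (by omega)) (ih _ (by omega) (by omega)) (hB N)
      _ = (‖f 0‖ + B) * N - B := by rw [← hhalves]; ring

theorem isBigO_sum_range_of_sub_div_two {F : Type*} [NormedAddCommGroup F] {f : ℕ → F}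
    (hf : (fun N ↦ ∑ n ∈ range N, (f n - f (n / 2))) =O[atTop] (fun _ ↦ (1 : ℝ))) :
    (fun N ↦ ∑ n ∈ range N, f n) =O[atTop] (fun N ↦ (N : ℝ)) := by
  obtain ⟨B, hB⟩ := isBigO_one_nat_atTop_iff.1 hf
  refine IsBigO.of_bound (‖f 0‖ + B) (Eventually.of_forall fun N ↦ ?_)
  simpa using norm_sum_range_le_of_norm_sum_sub_div_two_le hB N

theorem isBigO_one_sum_range_congr {u v : ℕ → E} (huv : u =ᶠ[atTop] v)
    (hv : (fun N ↦ ∑ n ∈ range N, v n) =O[atTop] (fun _ ↦ (1 : ℝ))) :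
    (fun N ↦ ∑ n ∈ range N, u n) =O[atTop] (fun _ ↦ (1 : ℝ)) := by
  obtain ⟨n₀, hn₀⟩ := eventually_atTop.1 huv
  have hconst : (fun N ↦ ∑ n ∈ range N, (u n - v n)) =ᶠ[atTop]
      fun _ ↦ ∑ n ∈ range n₀, (u n - v n) := by
    filter_upwards [eventually_ge_atTop n₀] with N hN
    exact eventually_constant_sum (fun n hn ↦ sub_eq_zero.2 (hn₀ n hn)) hN
  refine (hv.add (hconst.trans_isBigO (isBigO_const_const _ one_ne_zero _))).congr_left fun N ↦ ?_
  simp [sum_sub_distrib]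

theorem isBigO_one_sum_range_modEq {m : ℕ} (hm : 0 < m) (r : ℕ) :
    (fun N ↦ ∑ n ∈ range N, ((if n ≡ r [MOD m] then (1 : ℝ) else 0) - (m : ℝ)⁻¹))
      =O[atTop] (fun _ ↦ (1 : ℝ)) := by
  refine isBigO_one_nat_atTop_iff.2 ⟨1, fun N ↦ ?_⟩
  have hcount : ∑ n ∈ range N, ((if n ≡ r [MOD m] then (1 : ℝ) else 0) - (m : ℝ)⁻¹)
      = N.count (· ≡ r [MOD m]) - (N : ℝ) / m := by
    rw [sum_sub_distrib, sum_boole, Nat.count_eq_card_filter_range]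
    simp [div_eq_mul_inv]
  have hfloor : ((N / m : ℕ) : ℝ) ≤ N / m := Nat.cast_div_le
  have hfloor' : (N : ℝ) / m < (N / m : ℕ) + 1 := by
    simpa only [Nat.floor_div_eq_div] using Nat.lt_floor_add_one ((N : ℝ) / m)
  rw [hcount, Nat.count_modEq_card _ hm, Real.norm_eq_abs, abs_le]
  push_cast
  split_ifs <;> constructor <;> linarith

theorem isLittleO_natCast_sum_range {f : ℕ → ℝ} (hf₀ : 0 ≤ f) (hf : Tendsto f atTop atTop) :
    (fun N : ℕ ↦ (N : ℝ)) =o[atTop] fun N ↦ ∑ n ∈ range N, f n := by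
  have hone : (fun _ ↦ (1 : ℝ)) =o[atTop] f :=
    isLittleO_const_left.2 (.inr (tendsto_norm_atTop_atTop.comp hf))
  have hsum : Tendsto (fun N ↦ ∑ n ∈ range N, f n) atTop atTop :=
    (tendsto_add_atTop_iff_nat 1).1 <| tendsto_atTop_mono
      (fun N ↦ single_le_sum (fun n _ ↦ hf₀ n) (self_mem_range_succ N)) hf
  simpa using hone.sum_range hf₀ hsum

end PartialSums

/-! ### Occurrences of a block in a word -/

section BlockCount

variable {α : Type*} [DecidableEq α]

/-- The number of positions of the word `l` at which the block `d` occurs. The empty block is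
counted once per letter, so that `blockCount [] l` is the length of `l`. -/
def blockCount (d l : List α) : ℕ := Nat.count (fun p ↦ d <+: l.drop p) l.length

@[simp]
theorem blockCount_nil_left (l : List α) : blockCount [] l = l.length := by
  simp [blockCount]

@[simp]
theorem blockCount_nil_right (d : List α) : blockCount d [] = 0 := by
  simp [blockCount]

theorem blockCount_cons (d : List α) (a : α) (l : List α) :
    blockCount d (a :: l) = blockCount d l + if d <+: a :: l then 1 else 0 := by
  simp [blockCount, Nat.count_succ']

theorem blockCount_le_length (d l : List α) : blockCount d l ≤ l.length :=
  Nat.count_le _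

theorem blockCount_append_le_length_add (d l₁ l₂ : List α) :
    blockCount d (l₁ ++ l₂) ≤ l₁.length + blockCount d l₂ := by
  rw [blockCount, List.length_append, Nat.count_add]
  exact Nat.add_le_add (Nat.count_le _) (by simp [blockCount, List.drop_length_add_append])

theorem le_blockCount_append (d l₁ l₂ : List α) :
    blockCount d l₁ + blockCount d l₂ ≤ blockCount d (l₁ ++ l₂) := by
  induction l₁ with
  | nil => simp
  | cons a l₁ ih =>
    rw [List.cons_append, blockCount_cons, blockCount_cons]
    have hprefix : d <+: a :: l₁ → d <+: a :: (l₁ ++ l₂) := List.prefix_append_of_prefix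
    split_ifs <;> grind

theorem blockCount_append_le (d l₁ l₂ : List α) :
    blockCount d (l₁ ++ l₂) ≤ blockCount d l₁ + blockCount d l₂ + d.length := by
  induction l₁ with
  | nil => simp
  | cons a l₁ ih =>
    rw [List.cons_append, blockCount_cons, blockCount_cons]
    by_cases hlen : d.length ≤ (a :: l₁).length
    · have hprefix : d <+: a :: (l₁ ++ l₂) → d <+: a :: l₁ := fun h ↦
        List.prefix_of_prefix_length_le h (List.prefix_append (a :: l₁) l₂) hlen
      split_ifs <;> grind
    · have := blockCount_append_le_length_add d l₁ l₂
      rw [List.length_cons] at hlen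
      split_ifs <;> omega

/-- The excess of the number of occurrences of `d` in `l` over the number `c * l.length` expected
at frequency `c`. -/
def blockExcess (d : List α) (c : ℝ) (l : List α) : ℝ := blockCount d l - c * l.length

theorem abs_blockExcess_le (d : List α) (c : ℝ) (l : List α) :
    |blockExcess d c l| ≤ (1 + |c|) * l.length := by
  have hcount : (blockCount d l : ℝ) ≤ l.length := by exact_mod_cast blockCount_le_length d l
  calc |blockExcess d c l| ≤ |(blockCount d l : ℝ)| + |c * l.length| := abs_sub _ _
    _ ≤ (1 + |c|) * l.length := by simp only [abs_mul, Nat.abs_cast]; linarith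

theorem abs_blockExcess_append_sub_le (d : List α) (c : ℝ) (l₁ l₂ : List α) :
    |blockExcess d c (l₁ ++ l₂) - (blockExcess d c l₁ + blockExcess d c l₂)| ≤ d.length := by
  have hle : (blockCount d (l₁ ++ l₂) : ℝ) ≤ blockCount d l₁ + blockCount d l₂ + d.length := by
    exact_mod_cast blockCount_append_le d l₁ l₂
  have hge : (blockCount d l₁ + blockCount d l₂ : ℝ) ≤ blockCount d (l₁ ++ l₂) := by
    exact_mod_cast le_blockCount_append d l₁ l₂
  simp only [blockExcess, List.length_append, Nat.cast_add, abs_le]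
  constructor <;> linarith

end BlockCount

theorem occCount_length_eq_blockCount {a : ℕ → ℕ} {d l : List ℕ} (hd : d ≠ [])
    (hl : ∀ (p : ℕ) (hp : p < l.length), l[p] = a p) : occCount a d l.length = blockCount d l := by
  have hpos := List.length_pos_iff.2 hd
  rw [occCount, blockCount, Nat.count_eq_card_filter_range, ← Set.ncard_coe_finset]
  congr 1
  ext p
  simp only [Set.mem_ofPred_eq, coe_filter, mem_range, List.prefix_iff_getElem,
    List.getElem_drop, List.length_drop]
  constructor
  · rintro ⟨hp, hocc⟩
    refine ⟨by omega, by omega, fun j hj ↦ ?_⟩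
    rw [hl, hocc j hj, List.getD_eq_getElem _ _ hj]
  · rintro ⟨hp, hlen, hocc⟩
    refine ⟨by omega, fun j hj ↦ ?_⟩
    rw [List.getD_eq_getElem _ _ hj, hocc j hj, hl]

/-! ### Normality of concatenated sequences -/

section Concatenation

variable {α : Type*}

/-- The concatenation of the first `N` words of the sequence `w`. -/
def concatWords (w : ℕ → List α) (N : ℕ) : List α := (List.range N).flatMap w

theorem concatWords_zero (w : ℕ → List α) : concatWords w 0 = [] := rfl

theorem concatWords_succ (w : ℕ → List α) (N : ℕ) :
    concatWords w (N + 1) = concatWords w N ++ w N := by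
  simp [concatWords, List.range_succ]

theorem concatWords_prefix (w : ℕ → List α) {M N : ℕ} (h : M ≤ N) :
    concatWords w M <+: concatWords w N := by
  induction N, h using Nat.le_induction with
  | base => exact List.prefix_rfl
  | succ N _ ih => exact ih.trans (concatWords_succ w N ▸ List.prefix_append _ _)

theorem length_concatWords (w : ℕ → List α) (N : ℕ) :
    (concatWords w N).length = ∑ n ∈ range N, (w n).length := by
  induction N with
  | zero => rfl
  | succ N ih => rw [concatWords_succ, List.length_append, ih, sum_range_succ]

theorem strictMono_length_concatWords {w : ℕ → List α} (hw : ∀ n, w n ≠ []) :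
    StrictMono fun N ↦ (concatWords w N).length :=
  strictMono_nat_of_lt_succ fun N ↦ by
    have := List.length_pos_iff.2 (hw N)
    simp only [concatWords_succ, List.length_append]
    omega

theorem exists_length_concatWords_le_lt {w : ℕ → List α} (hw : ∀ n, w n ≠ []) (n : ℕ) :
    ∃ N, (concatWords w N).length ≤ n ∧ n < (concatWords w (N + 1)).length := by
  have hmono := strictMono_length_concatWords hw
  have hcover := iUnion_Ico_map_succ_eq_Ici (fun N ↦ hmono.monotone N.zero_le)
    hmono.not_bddAbove_range_of_isSuccArchimedean
  simpa using hcover.ge (Set.mem_Ici.2 n.zero_le)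

theorem abs_blockExcess_concatWords_sub_sum_le [DecidableEq α] (d : List α) (c : ℝ)
    (w : ℕ → List α) (N : ℕ) :
    |blockExcess d c (concatWords w N) - ∑ n ∈ range N, blockExcess d c (w n)|
      ≤ d.length * N := by
  induction N with
  | zero => simp [concatWords_zero, blockExcess]
  | succ N ih =>
    rw [concatWords_succ, sum_range_succ]
    have happend := abs_blockExcess_append_sub_le d c (concatWords w N) (w N)
    rw [abs_le] at happend ih ⊢
    push_cast
    constructor <;> linarith

theorem isLittleO_blockExcess_concatWords [DecidableEq α] {d : List α} {c : ℝ} {w : ℕ → List α}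
    (hN : (fun N : ℕ ↦ (N : ℝ)) =o[atTop] fun N ↦ ((concatWords w N).length : ℝ))
    (hsum : (fun N ↦ ∑ n ∈ range N, blockExcess d c (w n))
      =o[atTop] fun N ↦ ((concatWords w N).length : ℝ)) :
    (fun N ↦ blockExcess d c (concatWords w N))
      =o[atTop] fun N ↦ ((concatWords w N).length : ℝ) := by
  have hjunctions : (fun N ↦ blockExcess d c (concatWords w N)
      - ∑ n ∈ range N, blockExcess d c (w n)) =O[atTop] fun N : ℕ ↦ (N : ℝ) :=
    IsBigO.of_bound d.length <| Eventually.of_forall fun N ↦ by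
      simpa using abs_blockExcess_concatWords_sub_sum_le d c w N
  simpa using (hjunctions.trans_isLittleO hN).add hsum

/-- The infinite sequence of letters obtained by concatenating the words of `w`. The first `n + 1`
words contain the letter of index `n` when no word is empty; the default `0` is then never used. -/
def concatSeq (w : ℕ → List ℕ) (n : ℕ) : ℕ := (concatWords w (n + 1)).getD n 0

variable {w : ℕ → List ℕ}

theorem getElem_concatWords (hw : ∀ n, w n ≠ []) {N p : ℕ} (hp : p < (concatWords w N).length) :
    (concatWords w N)[p] = concatSeq w p := by
  have hp' : p < (concatWords w (p + 1)).length := (strictMono_length_concatWords hw).le_apply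
  rw [concatSeq, List.getD_eq_getElem _ _ hp']
  rcases le_total (p + 1) N with h | h
  · exact ((concatWords_prefix w h).getElem hp').symm
  · exact (concatWords_prefix w h).getElem hp

variable {d : List ℕ} {c : ℝ}

theorem abs_occCount_concatSeq_sub_le (hw : ∀ n, w n ≠ []) (hd : d ≠ []) {n N : ℕ}
    (hN : (concatWords w N).length ≤ n) (hN' : n < (concatWords w (N + 1)).length) :
    |(occCount (concatSeq w) d n : ℝ) - c * n|
      ≤ |blockExcess d c (concatWords w N)| + (1 + |c|) * (w N).length + d.length := by
  set r := (w N).take (n - (concatWords w N).length)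
  have hcut : (concatWords w (N + 1)).take n = concatWords w N ++ r := by
    rw [concatWords_succ, List.take_append, List.take_of_length_le hN]
  have hlength : (concatWords w N ++ r).length = n := by
    rw [← hcut, List.length_take, min_eq_left hN'.le]
  have hocc : occCount (concatSeq w) d n = blockCount d (concatWords w N ++ r) := by
    rw [← hlength]
    refine occCount_length_eq_blockCount hd fun p hp ↦ ?_
    simp [← hcut, getElem_concatWords hw]
  have hexcess : (occCount (concatSeq w) d n : ℝ) - c * n
      = blockExcess d c (concatWords w N ++ r) := by
    rw [blockExcess, hocc, hlength]
  have hr : |blockExcess d c r| ≤ (1 + |c|) * (w N).length :=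
    (abs_blockExcess_le d c r).trans (by gcongr; exact List.length_take_le' _ _)
  have happend := abs_blockExcess_append_sub_le d c (concatWords w N) r
  rw [hexcess]
  calc |blockExcess d c (concatWords w N ++ r)|
      = |(blockExcess d c (concatWords w N ++ r)
          - (blockExcess d c (concatWords w N) + blockExcess d c r))
          + blockExcess d c (concatWords w N) + blockExcess d c r| := by congr 1; ring
    _ ≤ _ := (abs_add_three _ _ _).trans (by linarith)

theorem tendsto_occCount_concatSeq_div (hw : ∀ n, w n ≠ []) (hd : d ≠ [])
    (hN : (fun N : ℕ ↦ (N : ℝ)) =o[atTop] fun N ↦ ((concatWords w N).length : ℝ))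
    (hlast : (fun N ↦ ((w N).length : ℝ)) =o[atTop] fun N ↦ ((concatWords w N).length : ℝ))
    (hsum : (fun N ↦ ∑ n ∈ range N, blockExcess d c (w n))
      =o[atTop] fun N ↦ ((concatWords w N).length : ℝ)) :
    Tendsto (fun n ↦ (occCount (concatSeq w) d n : ℝ) / n) atTop (𝓝 c) := by
  choose N hle hlt using exists_length_concatWords_le_lt hw
  have hNtop : Tendsto N atTop atTop := by
    refine tendsto_atTop.2 fun M ↦ ?_
    filter_upwards [eventually_ge_atTop (concatWords w M).length] with n hn
    exact Nat.lt_succ_iff.1 ((strictMono_length_concatWords hw).lt_iff_lt.1 (hn.trans_lt (hlt n)))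
  have hblock : (fun _ ↦ (d.length : ℝ)) =o[atTop] fun N ↦ ((concatWords w N).length : ℝ) :=
    ((isLittleO_const_id_atTop _).comp_tendsto tendsto_natCast_atTop_atTop).trans hN
  have hbound := ((isLittleO_blockExcess_concatWords hN hsum).abs_left.add
    (hlast.const_mul_left (1 + |c|))).add hblock
  have hexcess : (fun n ↦ (occCount (concatSeq w) d n : ℝ) - c * n) =o[atTop]
      fun n ↦ (n : ℝ) := by
    refine IsBigO.trans_isLittleO (IsBigO.of_bound' (Eventually.of_forall fun n ↦ ?_))
      ((hbound.comp_tendsto hNtop).trans_isBigO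
        (IsBigO.of_bound' (Eventually.of_forall fun n ↦ ?_)))
    · exact (abs_occCount_concatSeq_sub_le hw hd (hle n) (hlt n)).trans (le_abs_self _)
    · simpa using hle n
  refine tendsto_sub_nhds_zero_iff.1 (hexcess.tendsto_div_nhds_zero.congr' ?_)
  filter_upwards [eventually_gt_atTop 0] with n hn
  field_simp

end Concatenation

/-! ### Continued fractions along the Kepler tree -/

section ContinuedFraction

variable {r : ℚ}

theorem den_fract_inv_lt_den (h₀ : 0 < r) (h₁ : r < 1) : (Int.fract r⁻¹).den < r.den := by
  have hnum := Rat.num_pos.2 h₀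
  have hlt := Rat.num_lt_denom_iff.2 h₁
  rw [Rat.den_intFract, Rat.den_inv_of_ne_zero h₀.ne']
  omega

theorem cfeAux_of_not_mem_Ioo (fuel : ℕ) (hr : ¬(0 < r ∧ r < 1)) : cfeAux fuel r = [] := by
  cases fuel <;> simp [cfeAux, hr]

theorem cfeAux_eq_of_den_le {m n : ℕ} (hm : r.den ≤ m) (hn : r.den ≤ n) :
    cfeAux m r = cfeAux n r := by
  have hden := r.den_pos
  induction m generalizing n r with
  | zero => omega
  | succ m ih =>
    obtain _ | n := n
    · omega
    by_cases hr : 0 < r ∧ r < 1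
    · have hlt := den_fract_inv_lt_den hr.1 hr.2
      simp only [cfeAux, hr, and_self, if_true]
      rw [ih (by omega) (by omega : _ ≤ n) (Rat.den_pos _)]
    · rw [cfeAux_of_not_mem_Ioo _ hr, cfeAux_of_not_mem_Ioo _ hr]

theorem cfe_zero : cfe 0 = [] :=
  cfeAux_of_not_mem_Ioo _ (by simp)

theorem cfe_eq_cons (h₀ : 0 < r) (h₁ : r < 1) :
    cfe r = ⌊r⁻¹⌋.toNat :: cfe (Int.fract r⁻¹) := by
  rw [cfe, cfeAux_eq_of_den_le le_rfl (Nat.le_succ _), cfeAux, if_pos ⟨h₀, h₁⟩,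
    cfeAux_eq_of_den_le (den_fract_inv_lt_den h₀ h₁).le le_rfl, cfe]

theorem cfe_one_half : cfe (1 / 2) = [2] := by
  rw [cfe_eq_cons (by norm_num) (by norm_num), one_div, inv_inv,
    show ⌊(2 : ℚ)⌋ = 2 from rfl, Int.fract_ofNat 2, cfe_zero]
  rfl

theorem keplerStep_mem_Ioo (hr : 0 < r) (b : Bool) : keplerStep r b ∈ Set.Ioo 0 1 := by
  cases b <;> simp only [keplerStep, Bool.false_eq_true, if_false, if_true] <;>
    exact ⟨by positivity, by rw [div_lt_one (by positivity)]; linarith⟩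

theorem cfe_keplerStep_true (h₀ : 0 < r) (h₁ : r < 1) :
    cfe (keplerStep r true) = 1 :: cfe r := by
  have hstep := keplerStep_mem_Ioo h₀ true
  have hinv : (keplerStep r true)⁻¹ = r + 1 := by simp [keplerStep]
  rw [cfe_eq_cons hstep.1 hstep.2, hinv, Int.fract_add_one, Int.fract_eq_self.2 ⟨h₀.le, h₁⟩,
    Int.floor_add_one, Int.floor_eq_zero_iff.2 ⟨h₀.le, h₁⟩]
  rfl

theorem cfe_keplerStep_false (h₀ : 0 < r) (h₁ : r < 1) :
    cfe (keplerStep r false) = (cfe r).modifyHead (· + 1) := by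
  have hstep := keplerStep_mem_Ioo h₀ false
  have hinv : (keplerStep r false)⁻¹ = r⁻¹ + 1 := by
    simp only [keplerStep, Bool.false_eq_true, if_false]
    field_simp
    ring
  have hfloor : 0 ≤ ⌊r⁻¹⌋ := Int.floor_nonneg.2 (by positivity)
  rw [cfe_eq_cons hstep.1 hstep.2, hinv, Int.fract_add_one, Int.floor_add_one, cfe_eq_cons h₀ h₁,
    Int.toNat_add hfloor zero_le_one]
  rfl

end ContinuedFraction

theorem keplerSeq_of_lt_two {n : ℕ} (hn : n < 2) : keplerSeq n = 1 / 2 := by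
  rw [keplerSeq, if_pos (by omega)]

theorem keplerSeq_of_two_le {n : ℕ} (hn : 2 ≤ n) :
    keplerSeq n = keplerStep (keplerSeq (n / 2)) (decide (n % 2 = 1)) := by
  rw [keplerSeq, if_neg (by omega)]

theorem keplerSeq_mem_Ioo (n : ℕ) : keplerSeq n ∈ Set.Ioo 0 1 := by
  induction n using Nat.strong_induction_on with
  | _ n ih =>
    rcases lt_or_ge n 2 with hn | hn
    · rw [keplerSeq_of_lt_two hn]
      norm_num
    · rw [keplerSeq_of_two_le hn]
      exact keplerStep_mem_Ioo (ih (n / 2) (by omega)).1 _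

/-- The continued fraction expansion of `keplerSeq n`. It is `keplerCFE` with the index shifted so
that the children of the node `n` are `2 * n` and `2 * n + 1`; the value at `0` is junk. -/
def keplerExpansion (n : ℕ) : List ℕ := cfe (keplerSeq n)

theorem keplerExpansion_of_lt_two {n : ℕ} (hn : n < 2) : keplerExpansion n = [2] := by
  rw [keplerExpansion, keplerSeq_of_lt_two hn, cfe_one_half]

theorem keplerExpansion_of_odd {n : ℕ} (hn : 2 ≤ n) (hodd : n % 2 = 1) :
    keplerExpansion n = 1 :: keplerExpansion (n / 2) := by
  have hmem := keplerSeq_mem_Ioo (n / 2)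
  rw [keplerExpansion, keplerSeq_of_two_le hn, decide_eq_true hodd,
    cfe_keplerStep_true hmem.1 hmem.2, keplerExpansion]

theorem keplerExpansion_of_even {n : ℕ} (hn : 2 ≤ n) (heven : n % 2 = 0) :
    keplerExpansion n = (keplerExpansion (n / 2)).modifyHead (· + 1) := by
  have hmem := keplerSeq_mem_Ioo (n / 2)
  rw [keplerExpansion, keplerSeq_of_two_le hn, decide_eq_false (by omega),
    cfe_keplerStep_false hmem.1 hmem.2, keplerExpansion]

theorem exists_keplerExpansion_eq_cons (n : ℕ) : ∃ a l, keplerExpansion n = a :: l ∧ 0 < a := by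
  have hmem := keplerSeq_mem_Ioo n
  refine ⟨_, _, cfe_eq_cons hmem.1 hmem.2, ?_⟩
  rw [Int.pos_iff_toNat_pos.symm, Int.floor_pos]
  exact (one_lt_inv₀ hmem.1).2 hmem.2 |>.le

theorem length_keplerExpansion_le (n : ℕ) : (keplerExpansion n).length ≤ n + 1 := by
  induction n using Nat.strong_induction_on with
  | _ n ih =>
    rcases lt_or_ge n 2 with hn | hn
    · simp [keplerExpansion_of_lt_two hn]
    · have := ih (n / 2) (by omega)
      rcases Nat.mod_two_eq_zero_or_one n with h | h
      · rw [keplerExpansion_of_even hn h, List.length_modifyHead]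
        omega
      · rw [keplerExpansion_of_odd hn h, List.length_cons]
        omega

/-! ### Leading digits and binary digits -/

theorem one_cons_prefix_keplerExpansion_iff (d : List ℕ) {n : ℕ} (hn : 2 ≤ n) :
    1 :: d <+: keplerExpansion n ↔ n % 2 = 1 ∧ d <+: keplerExpansion (n / 2) := by
  rcases Nat.mod_two_eq_zero_or_one n with h | h
  · obtain ⟨a, l, ha, hpos⟩ := exists_keplerExpansion_eq_cons (n / 2)
    simp [keplerExpansion_of_even hn h, ha, h, hpos.ne']
  · simp [keplerExpansion_of_odd hn h, h]

theorem succ_cons_prefix_keplerExpansion_iff (d : List ℕ) {a n : ℕ} (ha : 0 < a) (hn : 2 ≤ n) :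
    (a + 1) :: d <+: keplerExpansion n ↔ n % 2 = 0 ∧ a :: d <+: keplerExpansion (n / 2) := by
  rcases Nat.mod_two_eq_zero_or_one n with h | h
  · obtain ⟨b, l, hb, -⟩ := exists_keplerExpansion_eq_cons (n / 2)
    simp [keplerExpansion_of_even hn h, hb, h]
  · simp [keplerExpansion_of_odd hn h, h, ha.ne']

theorem modEq_two_mul_iff {m n r b : ℕ} (hb : b < 2) :
    n ≡ 2 * r + b [MOD 2 * m] ↔ n % 2 = b ∧ n / 2 ≡ r [MOD m] := by
  have hdiv : (2 * r + b) / 2 = r := by omega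
  have hmod : (2 * r + b) % 2 = b := by omega
  rw [Nat.ModEq, Nat.mod_mul, Nat.mod_mul, hdiv, hmod, Nat.ModEq]
  omega

theorem exists_prefix_keplerExpansion_iff_modEq {d : List ℕ} (hd : ∀ x ∈ d, 0 < x) :
    ∃ r, ∀ n ≥ 2 ^ d.sum, d <+: keplerExpansion n ↔ n ≡ r [MOD 2 ^ d.sum] := by
  induction d with
  | nil => exact ⟨0, fun n _ ↦ by simp [Nat.modEq_one]⟩
  | cons a d ih =>
    have ha : 1 ≤ a := hd a List.mem_cons_self
    replace ih := ih fun x hx ↦ hd x (List.mem_cons_of_mem a hx)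
    clear hd
    induction a, ha using Nat.le_induction with
    | base =>
      obtain ⟨r, hr⟩ := ih
      refine ⟨2 * r + 1, fun n hn ↦ ?_⟩
      rw [List.sum_cons, add_comm, pow_succ'] at hn ⊢
      have := Nat.one_le_two_pow (n := d.sum)
      rw [one_cons_prefix_keplerExpansion_iff d (by omega), hr _ (by omega),
        modEq_two_mul_iff one_lt_two]
    | succ a ha iha =>
      obtain ⟨r, hr⟩ := iha
      refine ⟨2 * r + 0, fun n hn ↦ ?_⟩
      rw [List.sum_cons, add_right_comm, ← List.sum_cons, pow_succ'] at hn ⊢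
      have := Nat.one_le_two_pow (n := (a :: d).sum)
      rw [succ_cons_prefix_keplerExpansion_iff d ha (by omega), hr _ (by omega),
        modEq_two_mul_iff two_pos]

/-! ### Occurrences of a block along the Kepler tree -/

theorem blockCount_tail_keplerExpansion (d : List ℕ) {n : ℕ} (hn : 2 ≤ n) :
    blockCount d (keplerExpansion n).tail = blockCount d (keplerExpansion (n / 2)).tail
      + if 1 :: d <+: keplerExpansion n then 1 else 0 := by
  rw [if_congr (one_cons_prefix_keplerExpansion_iff d hn) rfl rfl]
  obtain ⟨a, l, ha, -⟩ := exists_keplerExpansion_eq_cons (n / 2)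
  rcases Nat.mod_two_eq_zero_or_one n with h | h
  · simp [keplerExpansion_of_even hn h, ha, h]
  · simp [keplerExpansion_of_odd hn h, ha, h, blockCount_cons]

section KeplerCounts

variable {d : List ℕ}

theorem isBigO_sum_blockCount_tail_keplerExpansion (hd : ∀ x ∈ d, 0 < x) :
    (fun N ↦ ∑ n ∈ range N, ((blockCount d (keplerExpansion n).tail : ℝ)
      - (2 ^ (d.sum + 1))⁻¹ * Nat.log 2 n)) =O[atTop] fun N : ℕ ↦ (N : ℝ) := by
  obtain ⟨r, hr⟩ := exists_prefix_keplerExpansion_iff_modEq (d := 1 :: d) (by simpa using hd)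
  rw [List.sum_cons, add_comm] at hr
  refine isBigO_sum_range_of_sub_div_two (isBigO_one_sum_range_congr ?_
    (isBigO_one_sum_range_modEq (m := 2 ^ (d.sum + 1)) (by positivity) r))
  filter_upwards [eventually_ge_atTop (2 ^ (d.sum + 1)), eventually_ge_atTop 2] with n hn hn₂
  rw [blockCount_tail_keplerExpansion d hn₂, if_congr (hr n hn) rfl rfl,
    Nat.log_of_one_lt_of_le one_lt_two hn₂]
  push_cast
  ring

theorem isBigO_sum_blockCount_keplerExpansion (hd : ∀ x ∈ d, 0 < x) :
    (fun N ↦ ∑ n ∈ range N, ((blockCount d (keplerExpansion n) : ℝ)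
      - (2 ^ (d.sum + 1))⁻¹ * Nat.log 2 n)) =O[atTop] fun N : ℕ ↦ (N : ℝ) := by
  have hprefix : (fun N ↦ ∑ n ∈ range N, (if d <+: keplerExpansion n then (1 : ℝ) else 0))
      =O[atTop] fun N : ℕ ↦ (N : ℝ) := by
    refine IsBigO.of_bound' (Eventually.of_forall fun N ↦ ?_)
    rw [sum_boole, Real.norm_natCast, Real.norm_natCast]
    exact_mod_cast (card_filter_le _ _).trans_eq (card_range N)
  refine ((isBigO_sum_blockCount_tail_keplerExpansion hd).add hprefix).congr_left fun N ↦ ?_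
  rw [← sum_add_distrib]
  refine sum_congr rfl fun n _ ↦ ?_
  obtain ⟨a, l, ha, -⟩ := exists_keplerExpansion_eq_cons n
  rw [ha, blockCount_cons, List.tail_cons]
  push_cast
  ring

theorem isBigO_sum_blockCount_keplerCFE (hd : ∀ x ∈ d, 0 < x) :
    (fun N ↦ ∑ n ∈ range N, ((blockCount d (keplerCFE n) : ℝ)
      - (2 ^ (d.sum + 1))⁻¹ * Nat.log 2 (n + 1))) =O[atTop] fun N : ℕ ↦ (N : ℝ) := by
  have hsucc : (fun N : ℕ ↦ ((N + 1 : ℕ) : ℝ)) =O[atTop] fun N : ℕ ↦ (N : ℝ) := by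
    refine IsBigO.of_bound 2 ?_
    filter_upwards [eventually_ge_atTop 1] with N hN
    rw [Real.norm_natCast, Real.norm_natCast]
    exact_mod_cast (by omega : N + 1 ≤ 2 * N)
  have hshift := ((isBigO_sum_blockCount_keplerExpansion hd).comp_tendsto
    (tendsto_add_atTop_nat 1)).trans hsucc
  have hzero : (fun _ ↦ (blockCount d (keplerExpansion 0) : ℝ)) =O[atTop]
      fun N : ℕ ↦ (N : ℝ) :=
    ((isLittleO_const_id_atTop _).comp_tendsto tendsto_natCast_atTop_atTop).isBigO
  refine (hshift.sub hzero).congr_left fun N ↦ ?_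
  rw [Function.comp_apply, sum_range_succ', Nat.log_zero_right, Nat.cast_zero, mul_zero, sub_zero,
    add_sub_cancel_right]
  rfl

theorem keplerCFE_ne_nil (n : ℕ) : keplerCFE n ≠ [] := by
  obtain ⟨a, l, h, -⟩ := exists_keplerExpansion_eq_cons (n + 1)
  change keplerExpansion (n + 1) ≠ []
  simp [h]

theorem isBigO_length_concatWords_keplerCFE_sub :
    (fun N ↦ ((concatWords keplerCFE N).length : ℝ)
      - ∑ n ∈ range N, 2⁻¹ * (Nat.log 2 (n + 1) : ℝ)) =O[atTop] fun N : ℕ ↦ (N : ℝ) := by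
  refine (isBigO_sum_blockCount_keplerCFE (d := []) (by simp)).congr_left fun N ↦ ?_
  simp [length_concatWords, sum_sub_distrib]

theorem isLittleO_natCast_length_concatWords_keplerCFE :
    (fun N : ℕ ↦ (N : ℝ)) =o[atTop] fun N ↦ ((concatWords keplerCFE N).length : ℝ) := by
  have hlog : Tendsto (fun n ↦ 2⁻¹ * (Nat.log 2 (n + 1) : ℝ)) atTop atTop :=
    Tendsto.const_mul_atTop (by norm_num) <| tendsto_natCast_atTop_atTop.comp <|
      (tendsto_atTop_atTop_of_monotone Nat.log_monotone fun b ↦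
        ⟨2 ^ b, (Nat.log_pow one_lt_two b).ge⟩).comp (tendsto_add_atTop_nat 1)
  have hN := isLittleO_natCast_sum_range (fun n ↦ by positivity) hlog
  have hequiv : IsEquivalent atTop (fun N ↦ ((concatWords keplerCFE N).length : ℝ))
      fun N ↦ ∑ n ∈ range N, 2⁻¹ * (Nat.log 2 (n + 1) : ℝ) :=
    isBigO_length_concatWords_keplerCFE_sub.trans_isLittleO hN
  exact hN.trans_isBigO hequiv.isBigO_symm

theorem isBigO_length_keplerCFE :
    (fun n ↦ ((keplerCFE n).length : ℝ)) =O[atTop] fun n : ℕ ↦ (n : ℝ) := by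
  refine IsBigO.of_bound 3 ?_
  filter_upwards [eventually_ge_atTop 1] with n hn
  have hlength := length_keplerExpansion_le (n + 1)
  rw [Real.norm_natCast, Real.norm_natCast]
  exact_mod_cast (by omega : (keplerExpansion (n + 1)).length ≤ 3 * n)

theorem isBigO_sum_blockExcess_keplerCFE (hd : ∀ x ∈ d, 0 < x) :
    (fun N ↦ ∑ n ∈ range N, blockExcess d (2 ^ d.sum)⁻¹ (keplerCFE n))
      =O[atTop] fun N : ℕ ↦ (N : ℝ) := by
  refine ((isBigO_sum_blockCount_keplerCFE hd).sub
    (isBigO_length_concatWords_keplerCFE_sub.const_mul_left (2 ^ d.sum)⁻¹)).congr_left fun N ↦ ?_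
  rw [length_concatWords]
  push_cast
  rw [← sum_sub_distrib, mul_sum, ← sum_sub_distrib]
  refine sum_congr rfl fun n _ ↦ ?_
  rw [blockExcess, pow_succ, mul_inv]
  ring

end KeplerCounts

/-- **The Kepler concatenation `𝒦 = [2, 3, 1, 2, 4, 1, 3, 2, 2, 1, 1, 2, 5, …] ≈ 0.44031`
is Minkowski normal**: for every `k ≥ 1` and every block `d = (d₁, …, d_k)` of positive
integers, the number of positions `1 ≤ i ≤ n - k + 1` at which `d` occurs among the first
`n` digits of `𝒦`, divided by `n`, converges to `2^{-(d₁ + ⋯ + d_k)}` as `n → ∞`. -/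
theorem keplerDigits_minkowskiNormal : MinkowskiNormalSeq keplerDigits := by
  intro d hd_ne hd_pos
  have hN := isLittleO_natCast_length_concatWords_keplerCFE
  exact tendsto_occCount_concatSeq_div keplerCFE_ne_nil hd_ne hN
    (isBigO_length_keplerCFE.trans_isLittleO hN)
    ((isBigO_sum_blockExcess_keplerCFE hd_pos).trans_isLittleO hN)
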